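/- Let μ be a probability measure on ℝ with μ((−∞,0]) = 0 such that C := ∫₀^∞ x^{−1} dμ(x) < ∞ and ∫₀^∞ x dμ(x) < ∞, and let μ̃ be the probability measure on ℝ with density x ↦ 1/(C x) with respect to μ, with characteristic function φ̃(t) = ∫₀^∞ e^{i t x} dμ̃(x). Then for every t ≠ 0, the Fourier transform of the Polya kernel satisfies ∫_ℝ k_μ(r) e^{i r t} dr = (C/t²) · (2 − φ̃(t) − φ̃(−t)). -/

import Mathlib

open MeasureTheory

/-!
For `0 < x` the tent `r ↦ max 0 (1 - |r| / x)` is the Peano kernel of the second difference with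
step `x`: integrating `f''` against it yields `(f x - 2 f 0 + f (-x)) / x`. With
`f r = -e^{irt} / t²` this gives the Fourier transform of a single tent, and `f r = r² / 2` shows
that the tent has mass `x`, so that a finite mean of `μ` allows Fubini's theorem to integrate the
transforms against `μ`. Finally the factor `1 / x` is absorbed into the tilted measure.
-/

open Complex Set

/-- The tent (triangular) function of height `1` and half-width `x`, evaluated at `r`. It is
meaningful for `0 < x` only: `tent 0` is the constant `1`, since `|r| / 0 = 0`. -/
noncomputable def tent (x r : ℝ) : ℝ := max 0 (1 - |r| / x)

/-- The Polya kernel of `μ`: the mixture of the tents of half-width `x > 0` with weights `μ`. -/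
noncomputable def polyaKernel (μ : Measure ℝ) (r : ℝ) : ℝ := ∫ x in Ioi 0, tent x r ∂μ

section Tent

variable {x r : ℝ}

lemma tent_nonneg (x r : ℝ) : 0 ≤ tent x r := le_max_left _ _

lemma tent_neg (x r : ℝ) : tent x (-r) = tent x r := by simp only [tent, abs_neg]

lemma tent_of_nonneg_of_le (hr : 0 ≤ r) (hrx : r ≤ x) : tent x r = 1 - r / x := by
  rw [tent, abs_of_nonneg hr, max_eq_right]
  exact sub_nonneg.mpr (div_le_one_of_le₀ hrx (hr.trans hrx))

lemma tent_of_le_abs (hx : 0 < x) (hr : x ≤ |r|) : tent x r = 0 :=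
  max_eq_left (sub_nonpos.mpr ((one_le_div hx).mpr hr))

lemma continuous_tent (x : ℝ) : Continuous (tent x) := by
  unfold tent
  fun_prop

lemma measurable_tent : Measurable fun p : ℝ × ℝ => tent p.2 p.1 := by
  unfold tent
  fun_prop

lemma support_tent_subset (hx : 0 < x) : Function.support (tent x) ⊆ Ioo (-x) x := fun _ hr =>
  abs_lt.mp (not_le.mp fun h => hr (tent_of_le_abs hx h))

lemma integrable_tent (hx : 0 < x) : Integrable (tent x) :=
  (continuous_tent x).integrable_of_hasCompactSupport <|
    .of_support_subset_isCompact isCompact_Icc ((support_tent_subset hx).trans Ioo_subset_Icc_self)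

end Tent

section SecondDifference

variable {E : Type*} [NormedAddCommGroup E] [NormedSpace ℝ E] [CompleteSpace E]
  {f f' f'' : ℝ → E} {x : ℝ}

lemma intervalIntegral_tent_smul_deriv_deriv (hf : ∀ r, HasDerivAt f (f' r) r)
    (hf' : ∀ r, HasDerivAt f' (f'' r) r) (hf'' : Continuous f'') (hx : 0 < x) :
    ∫ r in 0..x, tent x r • f'' r = x⁻¹ • (f x - f 0) - f' 0 := by
  have hderiv (r : ℝ) :
      HasDerivAt (fun r => (1 - r / x) • f' r + x⁻¹ • f r) ((1 - r / x) • f'' r) r := by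
    convert! ((((hasDerivAt_id r).div_const x).const_sub 1).smul (hf' r)).add
      ((hf r).const_smul x⁻¹) using 1
    simp only [id_eq, one_div]
    module
  calc ∫ r in 0..x, tent x r • f'' r
      = ∫ r in 0..x, (1 - r / x) • f'' r := by
        refine intervalIntegral.integral_congr fun r hr => ?_
        rw [uIcc_of_le hx.le] at hr
        simp only [tent_of_nonneg_of_le hr.1 hr.2]
    _ = x⁻¹ • (f x - f 0) - f' 0 := by
        rw [intervalIntegral.integral_eq_sub_of_hasDerivAt (fun r _ => hderiv r)
          (Continuous.intervalIntegrable (by fun_prop) 0 x), div_self hx.ne', zero_div]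
        module

lemma integral_tent_smul_deriv_deriv (hf : ∀ r, HasDerivAt f (f' r) r)
    (hf' : ∀ r, HasDerivAt f' (f'' r) r) (hf'' : Continuous f'') (hx : 0 < x) :
    ∫ r, tent x r • f'' r = x⁻¹ • (f x - (2 : ℝ) • f 0 + f (-x)) := by
  have hsupp : Function.support (fun r => tent x r • f'' r) ⊆ Ioc (-x) x :=
    (Function.support_smul_subset_left _ _).trans
      ((support_tent_subset hx).trans Ioo_subset_Ioc_self)
  have hint (a b : ℝ) : IntervalIntegrable (fun r => tent x r • f'' r) volume a b :=
    ((continuous_tent x).smul hf'').intervalIntegrable a b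
  have hleft : ∫ r in -x..0, tent x r • f'' r = x⁻¹ • (f (-x) - f 0) + f' 0 := by
    have hneg {g g' : ℝ → E} (hg : ∀ r, HasDerivAt g (g' r) r) (r : ℝ) :
        HasDerivAt (fun r => g (-r)) (-g' (-r)) r := by
      simpa only [Function.comp_def, neg_one_smul] using (hg (-r)).scomp r (hasDerivAt_neg r)
    have hneg' (r : ℝ) : HasDerivAt (fun r => -f' (-r)) (f'' (-r)) r := by
      simpa only [neg_neg] using (hneg hf' r).fun_neg
    have h := intervalIntegral_tent_smul_deriv_deriv (hneg hf) hneg' (by fun_prop) hx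
    rw [neg_zero, sub_neg_eq_add] at h
    rw [← h, ← neg_zero, ← intervalIntegral.integral_comp_neg]
    simp only [tent_neg, neg_zero]
  rw [← intervalIntegral.integral_eq_integral_of_support_subset hsupp,
    ← intervalIntegral.integral_add_adjacent_intervals (hint _ 0) (hint 0 _), hleft,
    intervalIntegral_tent_smul_deriv_deriv hf hf' hf'' hx]
  module

lemma integral_tent (hx : 0 < x) : ∫ r, tent x r = x := by
  have hsq (r : ℝ) : HasDerivAt (fun r : ℝ => r ^ 2 / 2) r r := by
    simpa using (hasDerivAt_pow 2 r).div_const 2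
  have h := integral_tent_smul_deriv_deriv hsq hasDerivAt_id continuous_const hx
  simp only [smul_eq_mul, mul_one] at h
  rw [h]
  field_simp
  ring

lemma integral_tent_mul_cexp (hx : 0 < x) {t : ℝ} (ht : t ≠ 0) :
    ∫ r, (tent x r : ℂ) * cexp (I * r * t) =
      (x : ℂ)⁻¹ * (2 - cexp (I * t * x) - cexp (I * (-t : ℝ) * x)) / t ^ 2 := by
  have htc : (t : ℂ) ≠ 0 := ofReal_ne_zero.mpr ht
  have hexp (r : ℝ) :
      HasDerivAt (fun r : ℝ => cexp (I * r * t)) (cexp (I * r * t) * (I * t)) r := by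
    simpa using (((hasDerivAt_id r).ofReal_comp.const_mul I).mul_const (t : ℂ)).cexp
  have hf (r : ℝ) :
      HasDerivAt (fun r : ℝ => -cexp (I * r * t) / t ^ 2) (-I * cexp (I * r * t) / t) r := by
    convert! (hexp r).neg.div_const ((t : ℂ) ^ 2) using 1
    field_simp
  have hf' (r : ℝ) :
      HasDerivAt (fun r : ℝ => -I * cexp (I * r * t) / t) (cexp (I * r * t)) r := by
    convert! ((hexp r).const_mul (-I)).div_const (t : ℂ) using 1
    field_simp
    rw [I_sq, neg_neg]
  have h := integral_tent_smul_deriv_deriv hf hf' (by fun_prop) hx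
  simp only [real_smul] at h
  rw [h, mul_right_comm I (t : ℂ), mul_right_comm I ((-t : ℝ) : ℂ)]
  simp only [ofReal_neg, ofReal_zero, ofReal_inv, ofReal_ofNat, mul_zero, zero_mul, exp_zero,
    mul_neg, neg_mul]
  ring

end SecondDifference

lemma norm_cexp_I_mul_ofReal_mul_ofReal (s x : ℝ) : ‖cexp (I * s * x)‖ = 1 := by
  rw [mul_assoc, ← ofReal_mul, norm_exp_I_mul_ofReal]

section AbstractMeasure

variable {α E : Type*} [MeasurableSpace α] {ν : Measure α} [NormedAddCommGroup E]

lemma sigmaFinite_of_integrable_of_ae_ne_zero {f : α → E} (hf : Integrable f ν)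
    (hf0 : ∀ᵐ a ∂ν, f a ≠ 0) : SigmaFinite ν := by
  have hfin := hf.aefinStronglyMeasurable
  have hmem : ∀ᵐ a ∂ν, a ∈ hfin.sigmaFiniteSet := by
    filter_upwards [hf0,
      (ae_restrict_iff' hfin.measurableSet.compl).mp hfin.ae_eq_zero_compl] with a hne hzero
    exact not_not.mp fun ha => hne (hzero ha)
  exact Measure.restrict_eq_self_of_ae_mem hmem ▸ hfin.sigmaFinite_restrict

lemma integral_smul_integral_withDensity_normalized [NormedSpace ℝ E] {w : α → ℝ}
    (hw : Integrable w ν) (hw0 : 0 ≤ᵐ[ν] w) (f : α → E) :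
    (∫ a, w a ∂ν) • ∫ a, f a ∂ν.withDensity (fun a => ENNReal.ofReal ((∫ b, w b ∂ν)⁻¹ * w a)) =
      ∫ a, w a • f a ∂ν := by
  rw [integral_withDensity_eq_integral_toReal_smul₀
    (hw.aemeasurable.const_mul _).ennreal_ofReal (by simp), ← integral_smul]
  have hC0 : 0 ≤ ∫ a, w a ∂ν := integral_nonneg_of_ae hw0
  -- Total mass `0` makes the normalization `0⁻¹ = 0`; the identity survives as `w = 0` a.e.
  have hzero : ∀ᵐ a ∂ν, ∫ b, w b ∂ν = 0 → w a = 0 := by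
    by_cases hC : ∫ b, w b ∂ν = 0
    · filter_upwards [(integral_eq_zero_iff_of_nonneg_ae hw0 hw).mp hC] with a ha _ using ha
    · exact .of_forall fun _ h => absurd h hC
  refine integral_congr_ae ?_
  filter_upwards [hw0, hzero] with a ha hza
  rw [ENNReal.toReal_ofReal (mul_nonneg (inv_nonneg.mpr hC0) ha), smul_smul,
    inv_mul_eq_div, mul_div_cancel_of_imp' hza]

end AbstractMeasure

section PolyaKernel

variable {μ ν : Measure ℝ}

lemma integrable_tent_prod [SFinite ν] (hpos : ∀ᵐ x ∂ν, 0 < x) (hν : Integrable (fun x => x) ν) :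
    Integrable (fun p : ℝ × ℝ => tent p.2 p.1) (volume.prod ν) := by
  rw [integrable_prod_iff' measurable_tent.aestronglyMeasurable]
  refine ⟨hpos.mono fun x hx => integrable_tent hx, hν.congr ?_⟩
  filter_upwards [hpos] with x hx
  simp only [Real.norm_of_nonneg (tent_nonneg _ _), integral_tent hx]

lemma integral_polyaKernel_mul_cexp (hmean : IntegrableOn (fun x => x) (Ioi 0) μ) {t : ℝ}
    (ht : t ≠ 0) :
    ∫ r, (polyaKernel μ r : ℂ) * cexp (I * r * t) =
      ∫ x in Ioi 0, (x : ℂ)⁻¹ * (2 - cexp (I * t * x) - cexp (I * (-t : ℝ) * x)) / t ^ 2 ∂μ := by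
  have hpos : ∀ᵐ x ∂μ.restrict (Ioi 0), 0 < x := ae_restrict_mem measurableSet_Ioi
  have := sigmaFinite_of_integrable_of_ae_ne_zero hmean (hpos.mono fun _ hx => hx.ne')
  have hprod : Integrable (fun p : ℝ × ℝ => (tent p.2 p.1 : ℂ) * cexp (I * p.1 * t))
      (volume.prod (μ.restrict (Ioi 0))) :=
    (integrable_tent_prod hpos hmean).ofReal.mul_bdd (c := 1)
      (by fun_prop : Continuous _).aestronglyMeasurable
      (.of_forall fun p => (norm_cexp_I_mul_ofReal_mul_ofReal p.1 t).le)
  calc ∫ r, (polyaKernel μ r : ℂ) * cexp (I * r * t)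
      = ∫ r, ∫ x in Ioi 0, (tent x r : ℂ) * cexp (I * r * t) ∂μ := by
        simp only [polyaKernel, integral_mul_const, integral_complex_ofReal]
    _ = ∫ x in Ioi 0, (∫ r, (tent x r : ℂ) * cexp (I * r * t)) ∂μ := integral_integral_swap hprod
    _ = _ := integral_congr_ae (hpos.mono fun x hx => integral_tent_mul_cexp hx ht)

lemma integral_inv_mul_two_sub_cexp_sub_cexp (hinv : IntegrableOn (fun x : ℝ => x⁻¹) (Ioi 0) μ)
    (s t : ℝ) :
    ∫ x in Ioi 0, (x : ℂ)⁻¹ * (2 - cexp (I * s * x) - cexp (I * t * x)) ∂μ =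
      2 * (∫ x in Ioi 0, x⁻¹ ∂μ : ℝ) - ∫ x in Ioi 0, (x : ℂ)⁻¹ * cexp (I * s * x) ∂μ
        - ∫ x in Ioi 0, (x : ℂ)⁻¹ * cexp (I * t * x) ∂μ := by
  have hinvc : IntegrableOn (fun x : ℝ => (x : ℂ)⁻¹) (Ioi 0) μ := by
    simp only [← ofReal_inv]
    exact hinv.ofReal
  have hexp (s : ℝ) : IntegrableOn (fun x : ℝ => (x : ℂ)⁻¹ * cexp (I * s * x)) (Ioi 0) μ :=
    hinvc.mul_bdd (c := 1) (by fun_prop : Continuous _).aestronglyMeasurable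
      (.of_forall fun x => (norm_cexp_I_mul_ofReal_mul_ofReal s x).le)
  have hsub : IntegrableOn (fun x : ℝ => (x : ℂ)⁻¹ * 2 - (x : ℂ)⁻¹ * cexp (I * s * x))
      (Ioi 0) μ := (hinvc.mul_const 2).sub (hexp s)
  simp only [mul_sub]
  rw [integral_sub hsub (hexp t),
    integral_sub (hinvc.mul_const 2) (hexp s), integral_mul_const, mul_comm,
    ← integral_complex_ofReal]
  simp only [ofReal_inv]

lemma integral_inv_mul_integral_withDensity_inv
    (hinv : IntegrableOn (fun x : ℝ => x⁻¹) (Ioi 0) μ) {C : ℝ} (hC : C = ∫ x in Ioi 0, x⁻¹ ∂μ)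
    (f : ℝ → ℂ) :
    C * ∫ x in Ioi 0, f x ∂μ.withDensity (fun x => ENNReal.ofReal ((C * x)⁻¹)) =
      ∫ x in Ioi 0, (x : ℂ)⁻¹ * f x ∂μ := by
  have hinv0 : 0 ≤ᵐ[μ.restrict (Ioi 0)] fun x : ℝ => x⁻¹ := by
    filter_upwards [ae_restrict_mem measurableSet_Ioi] with x hx using inv_nonneg.mpr (le_of_lt hx)
  have h := integral_smul_integral_withDensity_normalized hinv hinv0 f
  simpa only [← hC, ← mul_inv, ← restrict_withDensity measurableSet_Ioi, real_smul, ofReal_inv]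
    using h

end PolyaKernel

theorem polya_kernel_special_case_fourier_general {μ : Measure ℝ}
    (hinv : IntegrableOn (fun x : ℝ => x⁻¹) (Ioi 0) μ)
    (hmean : IntegrableOn (fun x : ℝ => x) (Ioi 0) μ)
    {C : ℝ} (hC : C = ∫ x in Ioi 0, x⁻¹ ∂μ)
    {μtilde : Measure ℝ} (hμtilde : μtilde = μ.withDensity fun x => ENNReal.ofReal ((C * x)⁻¹))
    {φtilde : ℝ → ℂ} (hφ : ∀ t : ℝ, φtilde t = ∫ x in Ioi 0, cexp (I * t * x) ∂μtilde)
    {t : ℝ} (ht : t ≠ 0) :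
    ∫ r, (polyaKernel μ r : ℂ) * cexp (I * r * t) =
      (C / t ^ 2) * (2 - φtilde t - φtilde (-t)) := by
  have hCφ (s : ℝ) : C * φtilde s = ∫ x in Ioi 0, (x : ℂ)⁻¹ * cexp (I * s * x) ∂μ := by
    rw [hφ, hμtilde, integral_inv_mul_integral_withDensity_inv hinv hC]
  calc ∫ r, (polyaKernel μ r : ℂ) * cexp (I * r * t)
      = (2 * C - C * φtilde t - C * φtilde (-t)) / t ^ 2 := by
        rw [integral_polyaKernel_mul_cexp hmean ht, integral_div,
          integral_inv_mul_two_sub_cexp_sub_cexp hinv, ← hC, hCφ, hCφ]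
    _ = (C / t ^ 2) * (2 - φtilde t - φtilde (-t)) := by ring

/-- Second claim of Theorem 2.3: with `C = ∫₀^∞ x⁻¹ dμ(x) < ∞`, `μ̃` the measure with
density `1/(C x)` w.r.t. `μ`, and `φ̃` its characteristic function, the Fourier transform
of the Polya kernel satisfies `∫_ℝ k_μ(r) e^{irt} dr = (C/t²) (2 - φ̃(t) - φ̃(-t))`
for all `t ≠ 0`. -/
theorem polya_kernel_special_case_fourier (μ : Measure ℝ) [IsProbabilityMeasure μ]
    (hμ : μ (Set.Iic 0) = 0)
    (hC : Integrable (fun x : ℝ => x⁻¹) μ)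
    (hmean : Integrable (fun x : ℝ => x) μ)
    (C : ℝ) (hCdef : C = ∫ x in Set.Ioi (0 : ℝ), x⁻¹ ∂μ)
    (μtilde : Measure ℝ)
    (hμtilde : μtilde = μ.withDensity (fun x => ENNReal.ofReal ((C * x)⁻¹)))
    (φtilde : ℝ → ℂ)
    (hφ : ∀ t : ℝ, φtilde t = ∫ x in Set.Ioi (0 : ℝ), Complex.exp (Complex.I * t * x) ∂μtilde)
    (k : ℝ → ℝ)
    (hk : ∀ r : ℝ, k r = ∫ x in Set.Ioi (0 : ℝ), max 0 (1 - |r| / x) ∂μ)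
    (t : ℝ) (ht : t ≠ 0) :
    ∫ r : ℝ, (k r : ℂ) * Complex.exp (Complex.I * r * t)
      = ((C : ℂ) / (t : ℂ) ^ 2) * (2 - φtilde t - φtilde (-t)) := by
  obtain rfl : k = polyaKernel μ := funext hk
  exact polya_kernel_special_case_fourier_general hC.integrableOn hmean.integrableOn hCdef hμtilde
    hφ ht
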